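/- arXiv:math/0412163 — 2 statements merged into one kernel-verified Lean document; each statement's English description precedes it below -/
import Mathlib

section
/- Let N ≥ 1, ρ > 0, and let A = (A₁,…,A_N) be an N-tuple of bounded linear operators on a complex Hilbert space X admitting a uniform unitary ρ-dilation. Then A admits a uniform isometric ρ-dilation in the sense of Popescu; that is, C^u_{ρ,N} ⊆ C^P_{ρ,N}. -/
open ContinuousLinearMap

noncomputable section

/-- A continuous linear operator on a complex Hilbert space is unitary. -/
def IsUnitaryOp {Y : Type*} [NormedAddCommGroup Y] [InnerProductSpace ℂ Y] [CompleteSpace Y]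
    (T : Y →L[ℂ] Y) : Prop :=
  T ∘L adjoint T = 1 ∧ adjoint T ∘L T = 1

/-- A uniform unitary `ρ`-dilation of an `N`-tuple of bounded operators on a complex Hilbert
space `X`: a complex Hilbert space `Y`, a linear isometry `ι : X → Y`, and an `N`-tuple `At`
of operators on `Y` such that every unimodular combination `ζ₁At₁ + ⋯ + ζ_N At_N` is unitary,
and for every nonempty word `i₁,…,iₙ` one has
`A_{i₁}⋯A_{iₙ} = ρ · ι* ∘ (At_{i₁}⋯At_{iₙ}) ∘ ι`. -/
structure UniformUnitaryRhoDilation (N : ℕ) (ρ : ℝ) (X : Type*) [NormedAddCommGroup X]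
    [InnerProductSpace ℂ X] [CompleteSpace X] (A : Fin N → X →L[ℂ] X) where
  Y : Type
  [instN : NormedAddCommGroup Y]
  [instI : InnerProductSpace ℂ Y]
  [instC : CompleteSpace Y]
  ι : X →L[ℂ] Y
  isom : Isometry ι
  At : Fin N → Y →L[ℂ] Y
  unit : ∀ ζ : Fin N → ℂ, (∀ k, ‖ζ k‖ = 1) → IsUnitaryOp (∑ k, ζ k • At k)
  dil : ∀ w : List (Fin N), w ≠ [] →
    (w.map A).prod = (ρ : ℂ) • (adjoint ι ∘L ((w.map At).prod ∘L ι))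

/-- The class `C^u_{ρ,N}`: `N`-tuples admitting a uniform unitary `ρ`-dilation. -/
def MemCu (N : ℕ) (ρ : ℝ) {X : Type*} [NormedAddCommGroup X] [InnerProductSpace ℂ X]
    [CompleteSpace X] (A : Fin N → X →L[ℂ] X) : Prop :=
  Nonempty (UniformUnitaryRhoDilation N ρ X A)

/-- A uniform isometric `ρ`-dilation in the sense of Popescu: a complex Hilbert space `Y`,
a linear isometry `ι : X → Y`, and operators `V₁,…,V_N` on `Y` with `V_k* V_k = I`,
`V_k* V_j = 0` for `k ≠ j`, and `A_{i₁}⋯A_{iₙ} = ρ · ι* ∘ (V_{i₁}⋯V_{iₙ}) ∘ ι` for every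
nonempty word `i₁,…,iₙ`. -/
structure PopescuRhoDilation (N : ℕ) (ρ : ℝ) (X : Type*) [NormedAddCommGroup X]
    [InnerProductSpace ℂ X] [CompleteSpace X] (A : Fin N → X →L[ℂ] X) where
  Y : Type
  [instN : NormedAddCommGroup Y]
  [instI : InnerProductSpace ℂ Y]
  [instC : CompleteSpace Y]
  ι : X →L[ℂ] Y
  isom : Isometry ι
  V : Fin N → Y →L[ℂ] Y
  isometric : ∀ k, adjoint (V k) ∘L V k = 1
  orth : ∀ k j, k ≠ j → adjoint (V k) ∘L V j = 0
  dil : ∀ w : List (Fin N), w ≠ [] →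
    (w.map A).prod = (ρ : ℂ) • (adjoint ι ∘L ((w.map V).prod ∘L ι))

/-- The Popescu class `C^P_{ρ,N}`: `N`-tuples admitting a uniform isometric `ρ`-dilation. -/
def MemCP (N : ℕ) (ρ : ℝ) {X : Type*} [NormedAddCommGroup X] [InnerProductSpace ℂ X]
    [CompleteSpace X] (A : Fin N → X →L[ℂ] X) : Prop :=
  Nonempty (PopescuRhoDilation N ρ X A)


section Alg

variable {R : Type*} [Ring R] [StarRing R] [Algebra ℂ R] [StarModule ℂ R]

lemma aux_cross (A T : R)
    (h : ∀ s : ℂ, ‖s‖ = 1 → star (s • A + T) * (s • A + T) = 1) : star A * T = 0 := by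
  have h1 := h 1 (by simp)
  have h2 := h (-1) (by simp)
  have h3 := h Complex.I (by simp)
  have h4 := h (-Complex.I) (by simp)
  simp only [star_add, star_smul, add_mul, mul_add, smul_mul_assoc, mul_smul_comm, smul_smul,
    star_neg, star_one, Complex.star_def, Complex.conj_I, neg_mul, mul_neg, neg_neg,
    Complex.I_mul_I, one_smul, neg_smul, one_mul, map_neg] at h1 h2 h3 h4
  set x := star A * T
  set y := star T * A
  set p := star A * A
  set q := star T * T
  have e1 : (2 : ℂ) • (x + y) = 0 := by
    have := h1.trans h2.symm
    linear_combination (norm := module) this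
  have e2 : (2 * Complex.I) • (y - x) = 0 := by
    have := h3.trans h4.symm
    linear_combination (norm := module) this
  have e1' : x + y = 0 := (smul_eq_zero_iff_right (by norm_num)).1 e1
  have e2' : y - x = 0 := (smul_eq_zero_iff_right (by simp)).1 e2
  have e3 : (2 : ℂ) • x = 0 := by
    linear_combination (norm := module) e1' - e2'
  exact (smul_eq_zero_iff_right (by norm_num)).1 e3

lemma aux_split {N : ℕ} (B : Fin N → R) (ζ : Fin N → ℂ) (a : Fin N) (s : ℂ) :
    ∑ k, (Function.update ζ a s) k • B k = s • B a + ∑ k ∈ Finset.univ.erase a, ζ k • B k := by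
  rw [← Finset.add_sum_erase _ _ (Finset.mem_univ a)]
  congr 1
  · simp
  · refine Finset.sum_congr rfl fun k hk => ?_
    rw [Function.update_of_ne (Finset.ne_of_mem_erase hk)]

lemma aux_norm {N : ℕ} (ζ : Fin N → ℂ) (hζ : ∀ k, ‖ζ k‖ = 1) (a : Fin N) (s : ℂ)
    (hs : ‖s‖ = 1) (k : Fin N) : ‖Function.update ζ a s k‖ = 1 := by
  by_cases hk : k = a
  · subst hk; simpa using hs
  · rw [Function.update_of_ne hk]; exact hζ k

lemma aux_off {N : ℕ} (B : Fin N → R)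
    (h : ∀ ζ : Fin N → ℂ, (∀ k, ‖ζ k‖ = 1) → star (∑ k, ζ k • B k) * (∑ k, ζ k • B k) = 1)
    (a b : Fin N) (hab : a ≠ b) : star (B a) * B b = 0 := by
  have key : ∀ ζ : Fin N → ℂ, (∀ k, ‖ζ k‖ = 1) →
      star (B a) * ∑ k ∈ Finset.univ.erase a, ζ k • B k = 0 := by
    intro ζ hζ
    refine aux_cross _ _ fun s hs => ?_
    rw [← aux_split]
    exact h _ (aux_norm ζ hζ a s hs)
  have hb : b ∈ Finset.univ.erase a := by simp [hab.symm]
  have k1 := key (fun _ => 1) (by simp)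
  have k2 := key (Function.update (fun _ => 1) b (-1)) (aux_norm _ (by simp) b _ (by simp))
  rw [← Finset.add_sum_erase _ _ hb] at k1 k2
  rw [Finset.sum_congr rfl (g := fun k => (1 : ℂ) • B k) (fun k hk => by
    rw [Function.update_of_ne (Finset.ne_of_mem_erase hk)])] at k2
  simp only [Function.update_self, mul_add, one_smul, neg_smul, mul_neg] at k1 k2
  have e3 : (2 : ℂ) • (star (B a) * B b) = 0 := by
    linear_combination (norm := module) k1 - k2
  exact (smul_eq_zero_iff_right (by norm_num)).1 e3

lemma aux_diag {N : ℕ} (B : Fin N → R)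
    (h : ∀ ζ : Fin N → ℂ, (∀ k, ‖ζ k‖ = 1) → star (∑ k, ζ k • B k) * (∑ k, ζ k • B k) = 1) :
    ∑ k, star (B k) * B k = 1 := by
  have h1 := h (fun _ => 1) (by simp)
  simp only [one_smul, star_sum, Finset.sum_mul_sum] at h1
  rw [← h1]
  refine Finset.sum_congr rfl fun k _ => ?_
  rw [Finset.sum_eq_single k]
  · intro j _ hj
    exact aux_off B h k j hj.symm
  · simp

end Alg

section Shift

variable {N : ℕ} {Y : Type} [NormedAddCommGroup Y] [InnerProductSpace ℂ Y] [CompleteSpace Y]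

/-- The Fock-type space of square summable `Y`-valued functions on words. -/
abbrev Fock (N : ℕ) (Y : Type) [NormedAddCommGroup Y] : Type :=
  lp (fun _ : List (Fin N) => Y) 2

/-- The values of the shifted function. -/
def shiftFun (k : Fin N) (f : List (Fin N) → Y) : List (Fin N) → Y
  | [] => 0
  | j :: w => if j = k then f w else 0

lemma cons_inj (k : Fin N) : Function.Injective (fun w : List (Fin N) => k :: w) :=
  fun _ _ h => (List.cons.inj h).2

lemma shiftFun_support (k : Fin N) (f : List (Fin N) → Y) (u : List (Fin N))
    (hu : u ∉ Set.range (fun w : List (Fin N) => k :: w)) : shiftFun k f u = 0 := by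
  cases u with
  | nil => rfl
  | cons j w =>
    have : j ≠ k := fun h => hu ⟨w, by simp [h]⟩
    simp [shiftFun, this]

lemma shiftFun_mem (k : Fin N) (f : Fock N Y) : Memℓp (shiftFun k (f : List (Fin N) → Y)) 2 := by
  have hf := lp.memℓp f
  rw [memℓp_gen_iff (by norm_num)] at hf ⊢
  rw [← (cons_inj k).summable_iff]
  · simpa [Function.comp_def, shiftFun] using hf
  · intro u hu
    rw [shiftFun_support k _ u hu]; simp

/-- The shift as a linear map. -/
def shiftLin (k : Fin N) : Fock N Y →ₗ[ℂ] Fock N Y where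
  toFun f := ⟨shiftFun k f, shiftFun_mem k f⟩
  map_add' f g := by
    ext u
    change shiftFun k (f + g : Fock N Y) u = shiftFun k f u + shiftFun k g u
    cases u with
    | nil => simp [shiftFun]
    | cons j w => by_cases h : j = k <;> simp [shiftFun, h]
  map_smul' c f := by
    ext u
    change shiftFun k (c • f : Fock N Y) u = c • shiftFun k f u
    cases u with
    | nil => simp [shiftFun]
    | cons j w => by_cases h : j = k <;> simp [shiftFun, h]

lemma shiftLin_apply (k : Fin N) (f : Fock N Y) (u : List (Fin N)) :
    (shiftLin k f : List (Fin N) → Y) u = shiftFun k f u := rfl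

lemma shiftLin_inner (k : Fin N) (f g : Fock N Y) :
    inner ℂ (shiftLin k f) (shiftLin k g) = inner ℂ f g := by
  rw [lp.inner_eq_tsum, lp.inner_eq_tsum, ← (cons_inj k).tsum_eq]
  · simp [shiftLin_apply, shiftFun]
  · intro u hu
    by_contra h
    apply hu
    simp only [shiftLin_apply]
    rw [shiftFun_support k _ u h]; simp

lemma shiftLin_orth (k j : Fin N) (hkj : k ≠ j) (f g : Fock N Y) :
    inner ℂ (shiftLin k f) (shiftLin j g) = 0 := by
  rw [lp.inner_eq_tsum]
  convert tsum_zero with u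
  simp only [shiftLin_apply]
  cases u with
  | nil => simp [shiftFun]
  | cons i w =>
    by_cases h : i = k
    · simp [shiftFun, h, hkj]
    · simp [shiftFun, h]

/-- The shift as a continuous linear map. -/
def shiftC (k : Fin N) : Fock N Y →L[ℂ] Fock N Y :=
  ((shiftLin k).isometryOfInner (shiftLin_inner k)).toContinuousLinearMap

lemma shiftC_apply (k : Fin N) (f : Fock N Y) : shiftC k f = shiftLin k f := rfl

/-- The vacuum embedding. -/
def vac : Y →L[ℂ] Fock N Y :=
  (lp.singleContinuousLinearMap ℂ (fun _ : List (Fin N) => Y) 2 [])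

lemma vac_inner (y : Y) (f : Fock N Y) : inner ℂ (vac y) f = inner ℂ y (f []) :=
  lp.inner_single_left (𝕜 := ℂ) (G := fun _ : List (Fin N) => Y) [] y f

lemma vac_adj_apply (f : Fock N Y) : adjoint (vac (N := N) (Y := Y)) f = f [] := by
  refine ext_inner_left ℂ fun y => ?_
  rw [adjoint_inner_right, vac_inner]

lemma vac_adj_vac (y : Y) : adjoint (vac (N := N) (Y := Y)) (vac y) = y := by
  rw [vac_adj_apply]
  simp [vac]

lemma vac_adj_shift (k : Fin N) (f : Fock N Y) :
    adjoint (vac (N := N) (Y := Y)) (shiftC k f) = 0 := by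
  rw [vac_adj_apply]
  rfl

lemma shift_adj_vac (k : Fin N) (y : Y) :
    adjoint (shiftC k) (vac (N := N) (Y := Y) y) = 0 := by
  refine ext_inner_right ℂ fun f => ?_
  rw [adjoint_inner_left, ← adjoint_inner_right, vac_adj_shift, inner_zero_right, inner_zero_left]

lemma shift_adj_self (k : Fin N) : adjoint (shiftC (Y := Y) k) ∘L shiftC k = 1 := by
  ext1 f
  refine ext_inner_left ℂ fun y => ?_
  rw [comp_apply, adjoint_inner_right]
  exact shiftLin_inner k y f

lemma shift_adj_ne (k j : Fin N) (h : k ≠ j) :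
    adjoint (shiftC (Y := Y) k) ∘L shiftC j = 0 := by
  ext1 f
  refine ext_inner_left ℂ fun y => ?_
  rw [comp_apply, adjoint_inner_right]
  rw [zero_apply, inner_zero_right]
  exact shiftLin_orth k j h y f

end Shift

section Dil

variable {N : ℕ} {Y : Type} [NormedAddCommGroup Y] [InnerProductSpace ℂ Y] [CompleteSpace Y]
variable {L : Type} [NormedAddCommGroup L] [InnerProductSpace ℂ L] [CompleteSpace L]

/-- The isometric dilation. -/
def dilV (E : Y →L[ℂ] L) (S : Fin N → L →L[ℂ] L) (B : Fin N → Y →L[ℂ] Y) (k : Fin N) :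
    L →L[ℂ] L :=
  E ∘L B k ∘L adjoint E + S k ∘L (1 - E ∘L (adjoint (B k) ∘L B k) ∘L adjoint E)

lemma dilV_adj (E : Y →L[ℂ] L) (S : Fin N → L →L[ℂ] L) (B : Fin N → Y →L[ℂ] Y) (k : Fin N) :
    adjoint (dilV E S B k) = E ∘L adjoint (B k) ∘L adjoint E +
      (1 - E ∘L (adjoint (B k) ∘L B k) ∘L adjoint E) ∘L adjoint (S k) := by
  have h1 : adjoint (1 : L →L[ℂ] L) = 1 := adjoint_id
  simp [dilV, adjoint_comp, h1, comp_assoc]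

lemma dilV_mul (E : Y →L[ℂ] L) (S : Fin N → L →L[ℂ] L) (B : Fin N → Y →L[ℂ] Y)
    (hE : ∀ y, adjoint E (E y) = y) (hES : ∀ k f, adjoint E (S k f) = 0)
    (hSE : ∀ k y, adjoint (S k) (E y) = 0) (k j : Fin N) (f : L) :
    adjoint (dilV E S B k) (dilV E S B j f) = E (adjoint (B k) (B j (adjoint E f))) +
      (1 - E ∘L (adjoint (B k) ∘L B k) ∘L adjoint E)
        ((adjoint (S k) ∘L S j)
          ((1 - E ∘L (adjoint (B j) ∘L B j) ∘L adjoint E) f)) := by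
  rw [dilV_adj, dilV]
  simp only [add_apply, comp_apply, map_add, hES, hSE, hE, map_zero, add_zero,
    zero_add]

lemma vac_adj_word (E : Y →L[ℂ] L) (S : Fin N → L →L[ℂ] L) (B : Fin N → Y →L[ℂ] Y)
    (hE : ∀ y, adjoint E (E y) = y) (hES : ∀ k f, adjoint E (S k f) = 0) (w : List (Fin N)) :
    adjoint E ∘L (w.map (dilV E S B)).prod = (w.map B).prod ∘L adjoint E := by
  induction w with
  | nil => rfl
  | cons k w ih =>
    have h : adjoint E ∘L dilV E S B k = B k ∘L adjoint E := by
      ext1 f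
      simp only [dilV, add_apply, comp_apply, map_add, hES, hE, add_zero]
    simp only [List.map_cons, List.prod_cons, mul_def]
    rw [← comp_assoc, h, comp_assoc, ih, comp_assoc]

end Dil

/-- Existence of a vacuum embedding and a compatible free family of shifts. -/
lemma exists_fock (N : ℕ) (Y : Type) [NormedAddCommGroup Y] [InnerProductSpace ℂ Y]
    [CompleteSpace Y] : ∃ (L : Type) (_ : NormedAddCommGroup L) (_ : InnerProductSpace ℂ L)
      (_ : CompleteSpace L) (E : Y →L[ℂ] L) (S : Fin N → L →L[ℂ] L),
      (∀ y, adjoint E (E y) = y) ∧ (∀ k f, adjoint E (S k f) = 0) ∧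
      (∀ k y, adjoint (S k) (E y) = 0) ∧ (∀ k, adjoint (S k) ∘L S k = 1) ∧
      (∀ k j, k ≠ j → adjoint (S k) ∘L S j = 0) :=
  ⟨Fock N Y, inferInstance, inferInstance, inferInstance, vac, shiftC,
    vac_adj_vac, vac_adj_shift, shift_adj_vac, shift_adj_self, shift_adj_ne⟩

/-- every `N`-tuple admitting a uniform unitary `ρ`-dilation admits a uniform
isometric `ρ`-dilation in the sense of Popescu, i.e. `C^u_{ρ,N} ⊆ C^P_{ρ,N}`. -/
theorem memCu_subset_memCP (N : ℕ) (hN : 1 ≤ N) (ρ : ℝ) (hρ : 0 < ρ)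
    {X : Type*} [NormedAddCommGroup X] [InnerProductSpace ℂ X] [CompleteSpace X]
    (A : Fin N → X →L[ℂ] X) (hA : MemCu N ρ A) : MemCP N ρ A := by
  obtain ⟨⟨Y, ι, isom, B, unit, dil⟩⟩ := hA
  have off : ∀ a b, a ≠ b → adjoint (B a) ∘L B b = 0 := by
    intro a b hab
    exact aux_off B (fun ζ hζ => (unit ζ hζ).2) a b hab
  have diag : ∑ k, B k * star (B k) = 1 := by
    have := aux_diag (fun k => star (B k)) (fun ζ hζ => by
      have h := (unit (fun k => star (ζ k)) (fun k => by simpa using hζ k)).1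
      have e : ∑ k, ζ k • star (B k) = star (∑ k, star (ζ k) • B k) := by
        simp [star_sum, star_smul]
      rw [e, star_star]
      exact h)
    simpa using this
  have pi : ∀ k, B k ∘L adjoint (B k) ∘L B k = B k := by
    intro k
    have := congrArg (· * B k) diag
    simp only [Finset.sum_mul, one_mul] at this
    rw [Finset.sum_eq_single k] at this
    · exact this
    · intro j _ hj
      rw [mul_assoc]
      have := off j k hj
      change star (B j) * B k = 0 at this
      rw [this, mul_zero]
    · simp
  have pi' : ∀ k y, B k (adjoint (B k) (B k y)) = B k y := fun k y => DFunLike.congr_fun (pi k) y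
  obtain ⟨L, _, _, _, E, S, hE, hES, hSE, hSS, hSo⟩ := exists_fock N Y
  refine ⟨⟨L, E ∘L ι, ?_, dilV E S B, ?_, ?_, ?_⟩⟩
  · refine Isometry.comp (g := E) (f := ι) ?_ isom
    refine AddMonoidHomClass.isometry_of_norm _ fun y => ?_
    have : ‖E y‖ ^ 2 = ‖y‖ ^ 2 := by
      have h : inner ℂ (E y) (E y) = inner ℂ y y := by
        rw [← adjoint_inner_right, hE]
      rw [inner_self_eq_norm_sq_to_K, inner_self_eq_norm_sq_to_K] at h
      exact_mod_cast h
    exact (sq_eq_sq₀ (norm_nonneg _) (norm_nonneg _)).1 this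
  · intro k
    ext1 f
    rw [comp_apply, dilV_mul E S B hE hES hSE, hSS]
    have h1 : ∀ g : L, (1 : L →L[ℂ] L) g = g := fun _ => rfl
    simp only [h1, sub_apply, comp_apply, map_sub, hE, pi']
    abel
  · intro k j hkj
    ext1 f
    rw [comp_apply, dilV_mul E S B hE hES hSE, hSo k j hkj]
    have : adjoint (B k) (B j (adjoint E f)) = 0 := DFunLike.congr_fun (off k j hkj) _
    rw [this]; simp
  · intro w hw
    rw [dil w hw]
    congr 1
    rw [adjoint_comp]
    ext1 x
    have := DFunLike.congr_fun (vac_adj_word E S B hE hES w) (E (ι x))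
    simp only [comp_apply] at this ⊢
    rw [this, hE]
end
end

section
/- For every ρ > 1 and every N > 1 there exist a complex Hilbert space X and an N-tuple A = (A₁,…,A_N) of bounded linear operators on X such that A admits a unitary ρ-dilation (A ∈ C_{ρ,N}) but A does not admit a uniform unitary ρ-dilation (A ∉ C^u_{ρ,N}); hence C^u_{ρ,N} ⊊ C_{ρ,N}. -/
open ContinuousLinearMap

noncomputable section

/-- A unitary `ρ`-dilation of an `N`-tuple of bounded operators on a complex Hilbert space `X`:
a complex Hilbert space `Y`, a linear isometry `ι : X → Y`, and an `N`-tuple `At` of operators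
on `Y` such that every unimodular combination `ζ₁At₁ + ⋯ + ζ_N At_N` is unitary, and
`(z₁A₁ + ⋯ + z_N A_N)ⁿ = ρ · ι* ∘ (z₁At₁ + ⋯ + z_N At_N)ⁿ ∘ ι` for all `z ∈ ℂ^N` and `n ≥ 1`. -/
structure UnitaryRhoDilation (N : ℕ) (ρ : ℝ) (X : Type*) [NormedAddCommGroup X]
    [InnerProductSpace ℂ X] [CompleteSpace X] (A : Fin N → X →L[ℂ] X) where
  Y : Type
  [instN : NormedAddCommGroup Y]
  [instI : InnerProductSpace ℂ Y]
  [instC : CompleteSpace Y]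
  ι : X →L[ℂ] Y
  isom : Isometry ι
  At : Fin N → Y →L[ℂ] Y
  unit : ∀ ζ : Fin N → ℂ, (∀ k, ‖ζ k‖ = 1) → IsUnitaryOp (∑ k, ζ k • At k)
  dil : ∀ (z : Fin N → ℂ) (n : ℕ), 1 ≤ n →
    (∑ k, z k • A k) ^ n = (ρ : ℂ) • (adjoint ι ∘L (((∑ k, z k • At k) ^ n) ∘L ι))

/-- The class `C_{ρ,N}`: `N`-tuples of bounded operators admitting a unitary `ρ`-dilation. -/
def MemC (N : ℕ) (ρ : ℝ) {X : Type*} [NormedAddCommGroup X] [InnerProductSpace ℂ X]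
    [CompleteSpace X] (A : Fin N → X →L[ℂ] X) : Prop :=
  Nonempty (UnitaryRhoDilation N ρ X A)

/-- A witness for STATEMENT 14: a complex Hilbert space `X` and an `N`-tuple `A` on `X`
admitting a unitary `ρ`-dilation but no uniform unitary `ρ`-dilation. -/
structure UnitaryNotUniformWitness (N : ℕ) (ρ : ℝ) where
  X : Type
  [instN : NormedAddCommGroup X]
  [instI : InnerProductSpace ℂ X]
  [instC : CompleteSpace X]
  A : Fin N → X →L[ℂ] X
  memC : MemC N ρ A
  not_memCu : ¬ MemCu N ρ A

/-- A shift on a Hilbert space with an orthonormal family indexed by the integers. -/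
theorem exists_shift : ∃ (S : lp (fun _ : ℤ => ℂ) 2 ≃ₗᵢ[ℂ] lp (fun _ : ℤ => ℂ) 2)
    (h : ℤ → lp (fun _ : ℤ => ℂ) 2), Orthonormal ℂ h ∧ ∀ n, S (h n) = h (n + 1) := by
  let b : HilbertBasis ℤ ℂ (lp (fun _ : ℤ => ℂ) 2) :=
    HilbertBasis.ofRepr (LinearIsometryEquiv.refl ℂ _)
  have ho : Orthonormal ℂ (fun n : ℤ => b (n + 1)) :=
    b.orthonormal.comp (fun n : ℤ => n + 1) (add_left_injective 1)
  have hr : Set.range (fun n : ℤ => b (n + 1)) = Set.range b := by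
    ext x
    constructor
    · rintro ⟨n, rfl⟩
      exact ⟨n + 1, rfl⟩
    · rintro ⟨n, rfl⟩
      exact ⟨n - 1, by simp⟩
  let c := HilbertBasis.mk ho (by rw [hr, b.dense_span])
  refine ⟨b.repr.trans c.repr.symm, b, b.orthonormal, fun n => ?_⟩
  have h1 : c n = b (n + 1) := by
    have := HilbertBasis.coe_mk ho (by rw [hr, b.dense_span])
    exact congrFun this n
  rw [← h1, LinearIsometryEquiv.trans_apply, HilbertBasis.repr_self, HilbertBasis.repr_symm_single]

/-- The model space. -/
abbrev ModelSpace : Type := WithLp 2 (lp (fun _ : ℤ => ℂ) 2 × lp (fun _ : ℤ => ℂ) 2)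

theorem exists_model : ∃ (p q : ℤ → ModelSpace) (M₁ M₂ : ModelSpace →L[ℂ] ModelSpace),
    (∀ m n, inner ℂ (p m) (p n) = if m = n then 1 else 0) ∧
    (∀ m n, inner ℂ (q m) (q n) = if m = n then 1 else 0) ∧
    (∀ m n, inner ℂ (p m) (q n) = 0) ∧ (∀ m n, inner ℂ (q m) (p n) = 0) ∧
    (∀ n, M₁ (p n) = q (n + 1)) ∧ (∀ n, M₁ (q n) = 0) ∧
    (∀ n, M₂ (q n) = p (n + 1)) ∧ (∀ n, M₂ (p n) = 0) ∧
    ∀ a b : ℂ, ‖a‖ = 1 → ‖b‖ = 1 → IsUnitaryOp (a • M₁ + b • M₂) := by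
  obtain ⟨S, h, ho, hS⟩ := exists_shift
  rw [orthonormal_iff_ite] at ho
  let H := lp (fun _ : ℤ => ℂ) 2
  let e : ModelSpace ≃L[ℂ] H × H := WithLp.prodContinuousLinearEquiv 2 ℂ H H
  let f : ModelSpace →L[ℂ] H := WithLp.fstL 2 ℂ H H
  let g : ModelSpace →L[ℂ] H := WithLp.sndL 2 ℂ H H
  let Sc : H →L[ℂ] H := (S.toContinuousLinearEquiv : H →L[ℂ] H)
  let Si : H →L[ℂ] H := (S.symm.toContinuousLinearEquiv : H →L[ℂ] H)
  let M₁ : ModelSpace →L[ℂ] ModelSpace :=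
    (e.symm : H × H →L[ℂ] ModelSpace) ∘L ((0 : ModelSpace →L[ℂ] H).prod (Sc ∘L f))
  let M₂ : ModelSpace →L[ℂ] ModelSpace :=
    (e.symm : H × H →L[ℂ] ModelSpace) ∘L ((Sc ∘L g).prod (0 : ModelSpace →L[ℂ] H))
  have hM₁ : ∀ x, M₁ x = WithLp.toLp 2 (0, S x.fst) := fun x => rfl
  have hM₂ : ∀ x, M₂ x = WithLp.toLp 2 (S x.snd, 0) := fun x => rfl
  let K : ℂ → ℂ → ModelSpace →L[ℂ] ModelSpace := fun a b =>
    (e.symm : H × H →L[ℂ] ModelSpace) ∘L (((starRingEnd ℂ a) • (Si ∘L g)).prod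
      ((starRingEnd ℂ b) • (Si ∘L f)))
  have hK : ∀ a b x, K a b x = WithLp.toLp 2 ((starRingEnd ℂ a) • S.symm x.snd,
    (starRingEnd ℂ b) • S.symm x.fst) := fun a b x => rfl
  have hT : ∀ (a b : ℂ) (x), (a • M₁ + b • M₂) x = WithLp.toLp 2 (b • S x.snd, a • S x.fst) := by
    intro a b x
    rw [add_apply, smul_apply, smul_apply, hM₁, hM₂, ← WithLp.toLp_smul, ← WithLp.toLp_smul,
      ← WithLp.toLp_add]
    simp
  refine ⟨fun n => WithLp.toLp 2 (h n, 0), fun n => WithLp.toLp 2 (0, h n), M₁, M₂,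
    ?_, ?_, ?_, ?_, ?_, ?_, ?_, ?_, ?_⟩
  · intro m n; simp [WithLp.prod_inner_apply, ho]
  · intro m n; simp [WithLp.prod_inner_apply, ho]
  · intro m n; simp [WithLp.prod_inner_apply]
  · intro m n; simp [WithLp.prod_inner_apply]
  · intro n; simp [hM₁, hS]
  · intro n; simp [hM₁]
  · intro n; simp [hM₂, hS]
  · intro n; simp [hM₂]
  · intro a b ha hb
    have haa : a * (starRingEnd ℂ) a = 1 := by rw [Complex.mul_conj']; simp [ha]
    have hbb : b * (starRingEnd ℂ) b = 1 := by rw [Complex.mul_conj']; simp [hb]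
    have hadj : K a b = adjoint (a • M₁ + b • M₂) := by
      rw [eq_adjoint_iff]
      intro x y
      rw [hK, hT, WithLp.prod_inner_apply, WithLp.prod_inner_apply]
      have h1 : ∀ u v : H, inner ℂ (S.symm u) v = inner ℂ u (S v) := by
        intro u v
        rw [← S.inner_map_map, S.apply_symm_apply]
      simp only [inner_smul_left, inner_smul_right, h1, Complex.conj_conj]
      exact add_comm _ _
    unfold IsUnitaryOp
    rw [← hadj]
    constructor
    · ext1 x
      rw [comp_apply, hT, hK]
      simp only [WithLp.toLp_fst, WithLp.toLp_snd, map_smul, S.apply_symm_apply, smul_smul,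
        haa, hbb, one_smul]
      rfl
    · ext1 x
      rw [comp_apply, hT, hK]
      simp only [WithLp.toLp_fst, WithLp.toLp_snd, map_smul, S.symm_apply_apply, smul_smul,
        mul_comm _ a, mul_comm _ b, haa, hbb, one_smul]
      rfl

theorem clm_mul_apply {V : Type*} [NormedAddCommGroup V] [NormedSpace ℂ V] (S T : V →L[ℂ] V)
    (x : V) : (S * T) x = S (T x) := rfl

/-- The small space. -/
abbrev SmallSpace : Type := EuclideanSpace ℂ (Fin 4)

set_option maxHeartbeats 1000000 in
theorem exists_core : ∃ (ι : SmallSpace →L[ℂ] ModelSpace) (M₁ M₂ : ModelSpace →L[ℂ] ModelSpace)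
    (B₁ B₂ : SmallSpace →L[ℂ] SmallSpace) (e : SmallSpace), Isometry ι ∧
    B₁ = adjoint ι ∘L (M₁ ∘L ι) ∧ B₂ = adjoint ι ∘L (M₂ ∘L ι) ∧
    (∀ a b : ℂ, ‖a‖ = 1 → ‖b‖ = 1 → IsUnitaryOp (a • M₁ + b • M₂)) ∧
    (∀ a b : ℂ, (a • B₁ + b • B₂) ^ 2 = 0) ∧
    (∀ (a b : ℂ) (n : ℕ), 2 ≤ n → adjoint ι ∘L (((a • M₁ + b • M₂) ^ n) ∘L ι) = 0) ∧
    ‖e‖ = 1 ∧ (∀ a b : ℂ, ‖a‖ = 1 → ‖b‖ = 1 → ‖(a • B₁ + b • B₂) e‖ = 1) ∧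
    B₁ (B₂ e) ≠ 0 := by
  obtain ⟨p, q, M₁, M₂, hpp, hqq, hpq, hqp, h1p, h1q, h2q, h2p, hU⟩ := exists_model
  obtain ⟨s, hs0, hsr, hss⟩ : ∃ s : ℂ, s ≠ 0 ∧ (starRingEnd ℂ) s = s ∧ s * s = 1 / 2 := by
    refine ⟨((Real.sqrt (1 / 2) : ℝ) : ℂ), ?_, Complex.conj_ofReal _, ?_⟩
    · have : (0 : ℝ) < Real.sqrt (1 / 2) := Real.sqrt_pos.mpr (by norm_num)
      exact_mod_cast this.ne'
    · rw [← Complex.ofReal_mul, Real.mul_self_sqrt (by norm_num)]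
      norm_num
  let v : Fin 4 → ModelSpace := ![s • (p 0 + q 0), p 1, q 1, s • (p 2 - q 2)]
  have hss' : s * (s * (1 + 1)) = 1 := by linear_combination 2 * hss
  have hv : Orthonormal ℂ v := by
    rw [orthonormal_iff_ite]
    intro i j
    fin_cases i <;> fin_cases j <;>
      simp [-inner_self_eq_norm_sq_to_K, v, inner_smul_left, inner_smul_right, inner_add_left, inner_add_right,
        inner_sub_left, inner_sub_right, hpp, hqq, hpq, hqp, hsr] <;> linear_combination 2 * hss
  let L : SmallSpace →ₗ[ℂ] ModelSpace :=
    (EuclideanSpace.basisFun (Fin 4) ℂ).toBasis.constr ℂ v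
  let E : Fin 4 → SmallSpace := EuclideanSpace.basisFun (Fin 4) ℂ
  have hL : ∀ i, L (E i) = v i := by
    intro i
    have := (EuclideanSpace.basisFun (Fin 4) ℂ).toBasis.constr_basis ℂ v i
    rwa [OrthonormalBasis.coe_toBasis] at this
  let I : SmallSpace →ₗᵢ[ℂ] ModelSpace :=
    L.isometryOfOrthonormal (v := (EuclideanSpace.basisFun (Fin 4) ℂ).toBasis)
      (by rw [OrthonormalBasis.coe_toBasis]; exact OrthonormalBasis.orthonormal _)
      (by
        have : (L ∘ (EuclideanSpace.basisFun (Fin 4) ℂ).toBasis) = v := by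
          rw [OrthonormalBasis.coe_toBasis]; funext i; exact hL i
        rw [this]; exact hv)
  let ι : SmallSpace →L[ℂ] ModelSpace := I.toContinuousLinearMap
  have hι : ∀ i, ι (E i) = v i := hL
  have hadj : ∀ y, adjoint ι y = ∑ i, (inner ℂ (v i) y) • E i := by
    intro y
    have := (EuclideanSpace.basisFun (Fin 4) ℂ).sum_repr' (adjoint ι y)
    rw [← this]
    refine Finset.sum_congr rfl fun i _ => ?_
    rw [adjoint_inner_right]
    congr 2
    exact hι i
  have hext : ∀ (T T' : SmallSpace →L[ℂ] SmallSpace), (∀ i, T (E i) = T' (E i)) → T = T' := by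
    intro T T' h
    apply ContinuousLinearMap.coe_injective
    apply (EuclideanSpace.basisFun (Fin 4) ℂ).toBasis.ext
    intro i
    rw [OrthonormalBasis.coe_toBasis]
    exact h i
  have hnE : ∀ i, ‖E i‖ = 1 := fun i => (EuclideanSpace.basisFun (Fin 4) ℂ).orthonormal.1 i
  have hiE : inner ℂ (E 1) (E 2) = 0 :=
    (EuclideanSpace.basisFun (Fin 4) ℂ).orthonormal.2 (by decide)
  have hιi : Isometry ι := I.isometry
  clear_value ι
  clear I
  clear hL
  clear L
  clear_value E
  have hTp : ∀ (a b : ℂ) n, (a • M₁ + b • M₂) (p n) = a • q (n + 1) := by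
    intro a b n; simp [h1p, h2p]
  have hTq : ∀ (a b : ℂ) n, (a • M₁ + b • M₂) (q n) = b • p (n + 1) := by
    intro a b n; simp [h1q, h2q]
  have hB0 : ∀ a b : ℂ, adjoint ι ((a • M₁ + b • M₂) (ι (E 0))) = (s * b) • E 1 + (s * a) • E 2 := by
    intro a b
    rw [hι, hadj, Fin.sum_univ_four]
    simp only [v, Matrix.cons_val, map_smul, map_add, hTp, hTq]
    simp [-inner_self_eq_norm_sq_to_K, inner_smul_left, inner_smul_right, inner_add_left, inner_add_right,
        inner_sub_left, inner_sub_right, hpp, hqq, hpq, hqp, hsr]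
  have hB1 : ∀ a b : ℂ, adjoint ι ((a • M₁ + b • M₂) (ι (E 1))) = (-(s * a)) • E 3 := by
    intro a b
    rw [hι, hadj, Fin.sum_univ_four]
    simp only [v, Matrix.cons_val, map_smul, map_add, hTp, hTq]
    simp [-inner_self_eq_norm_sq_to_K, inner_smul_left, inner_smul_right, inner_add_left, inner_add_right,
        inner_sub_left, inner_sub_right, hpp, hqq, hpq, hqp, hsr, mul_comm]
  have hB2 : ∀ a b : ℂ, adjoint ι ((a • M₁ + b • M₂) (ι (E 2))) = (s * b) • E 3 := by
    intro a b
    rw [hι, hadj, Fin.sum_univ_four]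
    simp only [v, Matrix.cons_val, map_smul, map_add, hTp, hTq]
    simp [-inner_self_eq_norm_sq_to_K, inner_smul_left, inner_smul_right, inner_add_left, inner_add_right,
        inner_sub_left, inner_sub_right, hpp, hqq, hpq, hqp, hsr, mul_comm]
  -- vectors of level at least three are killed
  have hkill : ∀ (m : ℤ), 3 ≤ m → ∀ x y : ℂ, adjoint ι (x • p m + y • q m) = 0 := by
    intro m hm x y
    have e0 : (0 : ℤ) ≠ m := by omega
    have e1 : (1 : ℤ) ≠ m := by omega
    have e2 : (2 : ℤ) ≠ m := by omega
    rw [hadj, Fin.sum_univ_four]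
    simp [-inner_self_eq_norm_sq_to_K, v, inner_smul_left, inner_smul_right, inner_add_left, inner_add_right,
        inner_sub_left, inner_sub_right, hpp, hqq, hpq, hqp, e0, e1, e2]
  have hlev : ∀ (a b : ℂ) (n : ℕ) (m : ℤ) (x y : ℂ), ∃ x' y' : ℂ,
      ((a • M₁ + b • M₂) ^ n) (x • p m + y • q m) = x' • p (m + n) + y' • q (m + n) := by
    intro a b n
    induction n with
    | zero => intro m x y; exact ⟨x, y, by simp⟩
    | succ k ih =>
      intro m x y
      obtain ⟨x', y', h⟩ := ih (m + 1) (y * b) (x * a)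
      refine ⟨x', y', ?_⟩
      rw [pow_succ, clm_mul_apply, map_add, map_smul, map_smul, hTp, hTq, smul_smul, smul_smul,
        add_comm ((x * a) • q (m + 1)), h]
      have : m + 1 + (k : ℤ) = m + ((k + 1 : ℕ) : ℤ) := by push_cast; ring
      rw [this]
  have hB3 : ∀ a b : ℂ, adjoint ι ((a • M₁ + b • M₂) (ι (E 3))) = 0 := by
    intro a b
    obtain ⟨x', y', h⟩ := hlev a b 1 2 s (-s)
    have : ι (E 3) = s • p 2 + (-s) • q 2 := by
      rw [hι]; simp [v, smul_sub, sub_eq_add_neg]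
    rw [pow_one] at h
    rw [this, h]
    exact hkill _ (by norm_num) _ _
  have hBc : ∀ (a b : ℂ) x, (a • (adjoint ι ∘L (M₁ ∘L ι)) + b • (adjoint ι ∘L (M₂ ∘L ι))) x
      = adjoint ι ((a • M₁ + b • M₂) (ι x)) := by
    intro a b x; simp
  have hns : ‖s‖ * ‖s‖ = 1 / 2 := by rw [← norm_mul, hss]; simp
  refine ⟨ι, M₁, M₂, _, _, E 0, hιi, rfl, rfl, hU, ?_, ?_, hnE 0, ?_, ?_⟩
  · intro a b
    apply hext
    intro i
    rw [pow_two, clm_mul_apply, hBc a b (E i)]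
    fin_cases i
    · simp only [Fin.zero_eta, hB0, map_add, map_smul, hBc, hB1, hB2, smul_smul, zero_apply]
      rw [← add_smul]
      convert zero_smul ℂ (E 3) using 2
      ring
    · simp only [Fin.mk_one, hB1, map_smul, hBc, hB3, smul_zero, zero_apply]
    · simp only [Fin.reduceFinMk, hB2, map_smul, hBc, hB3, smul_zero, zero_apply]
    · simp only [Fin.reduceFinMk, hB3, map_zero, zero_apply]
  · intro a b n hn
    apply hext
    intro i
    rw [comp_apply, comp_apply, hι, zero_apply]
    have key : ∀ (m : ℤ) (x y : ℂ), 3 ≤ m + n →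
        adjoint ι (((a • M₁ + b • M₂) ^ n) (x • p m + y • q m)) = 0 := by
      intro m x y h3
      obtain ⟨x', y', h⟩ := hlev a b n m x y
      rw [h]
      exact hkill _ h3 _ _
    fin_cases i
    · have h0 : v 0 = s • p 0 + s • q 0 := by simp [v]
      change adjoint ι (((a • M₁ + b • M₂) ^ n) (v 0)) = 0
      rw [h0]
      rcases Nat.lt_or_ge n 3 with h3 | h3
      · have : n = 2 := by omega
        subst this
        rw [pow_two, clm_mul_apply, hadj, Fin.sum_univ_four]
        simp only [v, Matrix.cons_val, map_smul, map_add, hTp, hTq]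
        simp [-inner_self_eq_norm_sq_to_K, inner_smul_left, inner_smul_right, inner_add_left, inner_add_right,
          inner_sub_left, inner_sub_right, hpp, hqq, hpq, hqp, hsr]
        left
        ring
      · exact key 0 s s (by omega)
    · have h0 : v 1 = (1 : ℂ) • p 1 + (0 : ℂ) • q 1 := by simp [v]
      change adjoint ι (((a • M₁ + b • M₂) ^ n) (v 1)) = 0
      rw [h0]
      exact key _ _ _ (by omega)
    · have h0 : v 2 = (0 : ℂ) • p 1 + (1 : ℂ) • q 1 := by simp [v]
      change adjoint ι (((a • M₁ + b • M₂) ^ n) (v 2)) = 0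
      rw [h0]
      exact key _ _ _ (by omega)
    · have h0 : v 3 = s • p 2 + (-s) • q 2 := by simp [v, smul_sub, sub_eq_add_neg]
      change adjoint ι (((a • M₁ + b • M₂) ^ n) (v 3)) = 0
      rw [h0]
      exact key _ _ _ (by omega)
  · intro a b ha hb
    rw [hBc, hB0]
    have h2 := norm_add_sq_eq_norm_sq_add_norm_sq_of_inner_eq_zero (𝕜 := ℂ)
      ((s * b) • E 1) ((s * a) • E 2) (by rw [inner_smul_left, inner_smul_right, hiE]; simp)
    simp only [norm_smul, norm_mul, ha, hb, hnE, mul_one] at h2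
    have h3 := norm_nonneg ((s * b) • E 1 + (s * a) • E 2)
    nlinarith
  · have e1 := hBc 1 0
    have e2 := hBc 0 1
    simp only [one_smul, zero_smul, add_zero, zero_add] at e1 e2
    have b1 := hB1 1 0
    have b0 := hB0 0 1
    simp only [one_smul, zero_smul, add_zero, zero_add, mul_one, mul_zero] at b1 b0
    rw [e2, b0, map_smul, e1, b1, smul_smul]
    intro h
    have h4 := congrArg norm h
    rw [norm_smul, hnE, norm_zero, mul_one, norm_eq_zero] at h4
    simp [hs0] at h4

/-- for every `ρ > 1` and `N > 1` there exist a complex Hilbert space `X` and an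
`N`-tuple `A` on `X` with `A ∈ C_{ρ,N}` but `A ∉ C^u_{ρ,N}`; hence `C^u_{ρ,N} ⊊ C_{ρ,N}`. -/
theorem exists_memC_not_memCu (ρ : ℝ) (hρ : 1 < ρ) (N : ℕ) (hN : 1 < N) :
    Nonempty (UnitaryNotUniformWitness N ρ) := by

  obtain ⟨ι, M₁, M₂, B₁, B₂, e, hι, hB₁, hB₂, hU, hsq, hn2, he, hiso, hne⟩ := exists_core
  let i₀ : Fin N := ⟨0, by omega⟩
  let i₁ : Fin N := ⟨1, hN⟩
  have h01 : i₁ ≠ i₀ := by simp [i₀, i₁]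
  let At : Fin N → ModelSpace →L[ℂ] ModelSpace :=
    fun k => if k = i₀ then M₁ else if k = i₁ then M₂ else 0
  let B : Fin N → SmallSpace →L[ℂ] SmallSpace :=
    fun k => if k = i₀ then B₁ else if k = i₁ then B₂ else 0
  have hρ0 : (ρ : ℂ) ≠ 0 := by
    have : ρ ≠ 0 := by linarith
    exact_mod_cast this
  have hAt : ∀ z : Fin N → ℂ, ∑ k, z k • At k = z i₀ • M₁ + z i₁ • M₂ := by
    intro z
    have : ∀ k, z k • At k = (if k = i₀ then z i₀ • M₁ else 0) +
        (if k = i₁ then z i₁ • M₂ else 0) := by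
      intro k
      by_cases h : k = i₀
      · subst h; simp [At, h01.symm]
      · by_cases h' : k = i₁
        · subst h'; simp [At, h01]
        · rw [if_neg h, if_neg h', add_zero]; simp only [At, if_neg h, if_neg h']; exact ContinuousLinearMap.ext fun x => by rw [smul_apply, zero_apply, smul_zero]
    simp [this, Finset.sum_add_distrib]
  have hB : ∀ z : Fin N → ℂ, ∑ k, z k • B k = z i₀ • B₁ + z i₁ • B₂ := by
    intro z
    have : ∀ k, z k • B k = (if k = i₀ then z i₀ • B₁ else 0) +
        (if k = i₁ then z i₁ • B₂ else 0) := by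
      intro k
      by_cases h : k = i₀
      · subst h; simp [B, h01.symm]
      · by_cases h' : k = i₁
        · subst h'; simp [B, h01]
        · rw [if_neg h, if_neg h', add_zero]; simp only [B, if_neg h, if_neg h']; exact ContinuousLinearMap.ext fun x => by rw [smul_apply, zero_apply, smul_zero]
    simp [this, Finset.sum_add_distrib]
  have hA : ∀ z : Fin N → ℂ, ∑ k, z k • ((ρ : ℂ) • B k) = (ρ : ℂ) • (z i₀ • B₁ + z i₁ • B₂) := by
    intro z
    rw [← hB, Finset.smul_sum]
    exact Finset.sum_congr rfl fun k _ => smul_comm _ _ _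
  refine ⟨{ X := SmallSpace, A := fun k => (ρ : ℂ) • B k, memC := ?_, not_memCu := ?_ }⟩
  · refine ⟨{ Y := ModelSpace, ι := ι, isom := hι, At := At, unit := ?_, dil := ?_ }⟩
    · intro ζ hζ
      rw [hAt]
      exact hU _ _ (hζ _) (hζ _)
    · intro z n hn
      rw [hA, hAt]
      rcases Nat.lt_or_ge n 2 with h | h
      · have : n = 1 := by omega
        subst this
        rw [pow_one, pow_one, hB₁, hB₂]
        congr 1
        ext1 x
        simp
      · rw [hn2 _ _ n h, smul_pow]
        obtain ⟨m, rfl⟩ := Nat.exists_eq_add_of_le h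
        rw [pow_add (_ + _), hsq, zero_mul, smul_zero, smul_zero]
  · rintro ⟨⟨Y, j, hj, T, hT, hdil⟩⟩
    have hjn : ∀ x, ‖j x‖ = ‖x‖ := (AddMonoidHomClass.isometry_iff_norm j).1 hj
    have h1 : ∀ k, B k = adjoint j ∘L (T k ∘L j) := by
      intro k
      have := hdil [k] (by simp)
      simp only [List.map_cons, List.map_nil, List.prod_cons, List.prod_nil, mul_one] at this
      exact smul_right_injective _ hρ0 this
    have hsum : ∀ ζ : Fin N → ℂ, (∑ k, ζ k • B k) e = adjoint j ((∑ k, ζ k • T k) (j e)) := by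
      intro ζ
      simp [h1]
    have hexact : ∀ ζ : Fin N → ℂ, (∀ k, ‖ζ k‖ = 1) →
        (∑ k, ζ k • T k) (j e) = j ((∑ k, ζ k • B k) e) := by
      intro ζ hζ
      set u := (∑ k, ζ k • T k) (j e) with hu
      have hun : ‖u‖ = 1 := by
        have := ((∑ k, ζ k • T k).norm_map_iff_adjoint_comp_self).2 (hT ζ hζ).2 (j e)
        rw [hu, this, hjn, he]
      have hw : ‖adjoint j u‖ = 1 := by
        rw [← hsum, hB]
        exact hiso _ _ (hζ _) (hζ _)
      rw [hsum, ← sub_eq_zero, ← norm_eq_zero, ← sq_eq_zero_iff, norm_sub_sq (𝕜 := ℂ), hjn,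
        ← adjoint_inner_left, inner_self_eq_norm_sq, hun, hw]
      norm_num
    have hk : T i₁ (j e) = j (B i₁ e) := by
      have ha := hexact (fun _ => 1) (by simp)
      have hb := hexact (fun k => if k = i₁ then -1 else 1) (by
        intro k; split_ifs <;> simp)
      have hd : ∀ (Z W : Type) [NormedAddCommGroup Z] [NormedSpace ℂ Z] [NormedAddCommGroup W]
          [NormedSpace ℂ W] (F : Fin N → Z →L[ℂ] W),
          (∑ k, (1 : ℂ) • F k) - (∑ k, (if k = i₁ then (-1 : ℂ) else 1) • F k)
            = (2 : ℂ) • F i₁ := by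
        intro Z W _ _ _ _ F
        rw [← Finset.sum_sub_distrib]
        have : ∀ k, (1 : ℂ) • F k - (if k = i₁ then (-1 : ℂ) else 1) • F k
            = if k = i₁ then (2 : ℂ) • F i₁ else 0 := by
          intro k
          by_cases h : k = i₁
          · subst h; simp [two_smul]
          · simp [h]
        rw [Finset.sum_congr rfl fun k _ => this k]
        simp
      have hc := congrArg₂ (· - ·) ha hb
      simp only [← map_sub, ← sub_apply] at hc
      rw [hd, hd, smul_apply, smul_apply, map_smul] at hc
      exact smul_right_injective _ (two_ne_zero) hc
    have h2 := hdil [i₀, i₁] (by simp)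
    simp only [List.map_cons, List.map_nil, List.prod_cons, List.prod_nil, mul_one] at h2
    have h3 := congrArg (fun F => F e) h2
    simp only [clm_mul_apply, smul_apply, comp_apply, map_smul, hk] at h3
    have h4 : adjoint j (T i₀ (j (B i₁ e))) = B i₀ (B i₁ e) := by
      conv_rhs => rw [h1 i₀]
      rfl
    rw [h4] at h3
    have h5 : B i₀ (B i₁ e) = B₁ (B₂ e) := by simp [B, h01]
    rw [h5] at h3
    have h6 := smul_right_injective _ hρ0 h3
    have h7 : ((ρ : ℂ) - 1) • B₁ (B₂ e) = 0 := by
      rw [sub_smul, one_smul, sub_eq_zero]; exact h6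
    rcases smul_eq_zero.1 h7 with h | h
    · rw [sub_eq_zero] at h
      have : ρ = 1 := by exact_mod_cast h
      linarith
    · exact hne h
end
end
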